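/- arXiv:2210.15730 — 2 statements merged into one kernel-verified Lean document; each statement's English description precedes it below -/
import Mathlib

section
/- Let 0 < a ≤ 1 with 2/a ∈ ℕ and let κ ≥ 1/2. Then the kernel of the one-dimensional (κ,a)-generalized Fourier transform satisfies |b_{κ,a}(x)| ≤ 1 for every x ∈ ℝ, and b_{κ,a}(0) = 1; hence sup_{x∈ℝ} |b_{κ,a}(x)| = 1. -/
open Real MeasureTheory Finset

/-- Normalized Bessel function j_lambda(v). -/
noncomputable def nbessel (l v : ℝ) : ℝ :=
  Real.Gamma (l + 1) *
    ∑' k : ℕ, (-1 : ℝ) ^ k / (Nat.factorial k * Real.Gamma (k + l + 1)) * (v / 2) ^ (2 * k)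

/-- Kernel of the one-dimensional (kappa,a)-generalized Fourier transform. -/
noncomputable def bker (κ a : ℝ) (x : ℝ) : ℂ :=
  (nbessel ((2 * κ - 1) / a) ((2 / a) * |x| ^ (a / 2)) : ℂ)
    + Complex.exp (-(Real.pi / a) * Complex.I) * ((a ^ (-(2 / a)) : ℝ) : ℂ)
      * ((Real.Gamma ((2 * κ - 1) / a + 1) / Real.Gamma ((2 * κ - 1) / a + 1 + 2 / a) : ℝ) : ℂ)
      * (x : ℂ) * (nbessel ((2 * κ - 1) / a + 2 / a) ((2 / a) * |x| ^ (a / 2)) : ℂ)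

/-!
Write `l = (2κ - 1) / a ≥ 0`, `R = 2 / a` and `v = (2 / a) |x| ^ (a / 2)`. Up to constants the two
terms of `b_{κ,a}(x)` are normalized Bessel functions of orders `l` and `l + R`, and Sonine's first
integral, with respect to one and the same law `Beta(1, l)` of `u` on `[0, 1]`, gives
`b_{κ,a}(x) = 𝔼 [J_0(v √u) + sgn(x) √u ^ R (-i) ^ R J_R(v √u)]`
(for `l = 0` the law degenerates to the point mass at `1`).
By Bessel's integral, `J_0(w) + δ (-i) ^ R J_R(w)` is the mean over the circle of
`exp (-i w cos θ) (1 + δ cos (R θ))`. For `|δ| ≤ 1` the second factor is nonnegative with mean one,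
so the modulus is at most one.
-/

open ProbabilityTheory
open Complex (I)
open scoped Nat

lemma norm_pow_le_one_of_abs_le_one {u : ℝ} (hu : |u| ≤ 1) (k : ℕ) : ‖u ^ k‖ ≤ 1 := by
  rw [norm_pow]
  exact pow_le_one₀ (norm_nonneg u) hu

section PowerSeriesIntegral

variable {μ : Measure ℝ} [IsFiniteMeasure μ]

lemma integrable_pow_of_ae_abs_le_one (hμ : ∀ᵐ u ∂μ, |u| ≤ 1) (k : ℕ) :
    Integrable (fun u => u ^ k) μ :=
  .of_bound (by fun_prop) 1 (hμ.mono fun _ hu => norm_pow_le_one_of_abs_le_one hu k)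

lemma integrable_tsum_mul_pow (hμ : ∀ᵐ u ∂μ, |u| ≤ 1) {c : ℕ → ℝ} (hc : Summable c) :
    Integrable (fun u => ∑' k, c k * u ^ k) μ := by
  refine .of_bound (Measurable.tsum fun k => by fun_prop).aestronglyMeasurable (∑' k, ‖c k‖)
    (hμ.mono fun u hu => tsum_of_norm_bounded hc.norm.hasSum fun k => ?_)
  rw [norm_mul]
  exact mul_le_of_le_one_right (norm_nonneg _) (norm_pow_le_one_of_abs_le_one hu k)

lemma integral_tsum_mul_pow (hμ : ∀ᵐ u ∂μ, |u| ≤ 1) {c : ℕ → ℝ} (hc : Summable c) :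
    ∫ u, ∑' k, c k * u ^ k ∂μ = ∑' k, c k * ∫ u, u ^ k ∂μ := by
  have hint k := integrable_pow_of_ae_abs_le_one hμ k
  have hpow (k : ℕ) : ∫ u, ‖u ^ k‖ ∂μ ≤ μ.real Set.univ := by
    have hle : ∀ᵐ u ∂μ, ‖u ^ k‖ ≤ 1 :=
      hμ.mono fun _ hu => norm_pow_le_one_of_abs_le_one hu k
    simpa using integral_mono_ae (hint k).norm (integrable_const 1) hle
  have hnorm : Summable fun k => ∫ u, ‖c k * u ^ k‖ ∂μ := by
    refine (hc.norm.mul_right (μ.real Set.univ)).of_nonneg_of_le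
      (fun k => integral_nonneg fun u => norm_nonneg _) fun k => ?_
    simp only [norm_mul, integral_const_mul]
    exact mul_le_mul_of_nonneg_left (hpow k) (norm_nonneg _)
  rw [← (hasSum_integral_of_summable_integral_norm (fun k => (hint k).const_mul (c k))
    hnorm).tsum_eq]
  simp only [integral_const_mul]

end PowerSeriesIntegral

section Beta

variable {α β s : ℝ} {E : Type*} [NormedAddCommGroup E] [NormedSpace ℝ E]

lemma measurable_betaPDF (α β : ℝ) : Measurable (betaPDF α β) :=
  (measurable_betaPDFReal α β).ennreal_ofReal

lemma ae_betaMeasure_mem_Ioo (α β : ℝ) : ∀ᵐ u ∂betaMeasure α β, u ∈ Set.Ioo (0 : ℝ) 1 := by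
  rw [betaMeasure, ae_withDensity_iff (measurable_betaPDF α β)]
  refine .of_forall fun u hu => ⟨?_, ?_⟩
  · exact lt_of_not_ge fun h => hu (betaPDF_eq_zero_of_nonpos h)
  · exact lt_of_not_ge fun h => hu (betaPDF_eq_zero_of_one_le h)

lemma ae_betaMeasure_abs_le_one (α β : ℝ) : ∀ᵐ u ∂betaMeasure α β, |u| ≤ 1 :=
  (ae_betaMeasure_mem_Ioo α β).mono fun u hu => by
    rw [abs_of_pos hu.1]
    exact hu.2.le

lemma integral_betaMeasure (hα : 0 < α) (hβ : 0 < β) (f : ℝ → E) :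
    ∫ u, f u ∂betaMeasure α β = ∫ u, betaPDFReal α β u • f u := by
  have hnonneg (u : ℝ) : 0 ≤ betaPDFReal α β u := by
    by_cases hu : 0 < u ∧ u < 1
    · exact (betaPDFReal_pos hu.1 hu.2 hα hβ).le
    · rw [betaPDFReal, if_neg hu]
  rw [betaMeasure, integral_withDensity_eq_integral_toReal_smul
    (measurable_betaPDF α β) (.of_forall fun u => ENNReal.ofReal_lt_top)]
  simp only [betaPDF, ENNReal.toReal_ofReal (hnonneg _)]

lemma integral_rpow_smul_betaMeasure (hα : 0 < α) (hs : 0 < α + s) (hβ : 0 < β) (f : ℝ → E) :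
    ∫ u, u ^ s • f u ∂betaMeasure α β =
      (beta (α + s) β / beta α β) • ∫ u, f u ∂betaMeasure (α + s) β := by
  rw [integral_betaMeasure hα hβ, integral_betaMeasure hs hβ, ← integral_smul]
  congr with u
  have hb := (beta_pos hα hβ).ne'
  have hb' := (beta_pos hs hβ).ne'
  simp only [betaPDFReal, smul_smul]
  congr 1
  split_ifs with hu
  · rw [add_sub_right_comm, rpow_add hu.1]
    field_simp
  · simp

lemma integral_pow_betaMeasure (hα : 0 < α) (hβ : 0 < β) (k : ℕ) :
    ∫ u, u ^ k ∂betaMeasure α β = beta (α + k) β / beta α β := by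
  have := isProbabilityMeasureBeta (by positivity : 0 < α + k) hβ
  simpa using integral_rpow_smul_betaMeasure (s := k) hα (by positivity) hβ fun _ => (1 : ℝ)

end Beta

/-- The `k`-th term of the power series of `j_l / Γ(l + 1)`. The factor `Γ(l + 1)` is left out so
that the series makes sense for every real `l`: at a pole of `Γ` division by zero gives `0`, the
correct value of `1 / Γ`. -/
noncomputable def nbesselTerm (l v : ℝ) (k : ℕ) : ℝ :=
  (-1) ^ k / (k ! * Gamma (k + l + 1)) * (v / 2) ^ (2 * k)

lemma nbessel_eq_Gamma_mul_tsum (l v : ℝ) :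
    nbessel l v = Gamma (l + 1) * ∑' k, nbesselTerm l v k := rfl

lemma summable_nbesselTerm (l v : ℝ) : Summable (nbesselTerm l v) := by
  have hGamma : ∀ᶠ k : ℕ in Filter.atTop, 1 ≤ Gamma (k + l + 1) := by
    filter_upwards [tendsto_natCast_atTop_atTop.eventually_ge_atTop (1 - l)] with k hk
    have h2 : 2 ≤ k + l + 1 := by linarith
    exact Gamma_two.ge.trans (Gamma_strictMonoOn_Ici.monotoneOn Set.self_mem_Ici h2 h2)
  refine (summable_pow_div_factorial ((v / 2) ^ 2)).of_norm_bounded_eventually_nat ?_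
  filter_upwards [hGamma] with k hk
  rw [nbesselTerm, norm_mul, norm_div, norm_pow, norm_neg, norm_one, one_pow, pow_mul,
    Real.norm_of_nonneg (by positivity), Real.norm_of_nonneg (by positivity), one_div_mul_eq_div]
  gcongr
  exact le_mul_of_one_le_right (by positivity) hk

lemma nbesselTerm_mul_sqrt (l v : ℝ) {u : ℝ} (hu : 0 ≤ u) (k : ℕ) :
    nbesselTerm l (v * √u) k = nbesselTerm l v k * u ^ k := by
  have h : (v * √u / 2) ^ (2 * k) = (v / 2) ^ (2 * k) * u ^ k := by
    rw [mul_div_right_comm, mul_pow, pow_mul √u, sq_sqrt hu]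
  rw [nbesselTerm, nbesselTerm, h, mul_assoc]

lemma nbessel_mul_sqrt (l v : ℝ) {u : ℝ} (hu : 0 ≤ u) :
    nbessel l (v * √u) = Gamma (l + 1) * ∑' k, nbesselTerm l v k * u ^ k := by
  simp only [nbessel_eq_Gamma_mul_tsum, nbesselTerm_mul_sqrt l v hu]

lemma nbessel_zero {l : ℝ} (hl : -1 < l) : nbessel l 0 = 1 := by
  have hΓ : Gamma (l + 1) ≠ 0 := (Gamma_pos_of_pos (by linarith)).ne'
  rw [nbessel_eq_Gamma_mul_tsum, tsum_eq_single 0 fun k hk => by simp [nbesselTerm, hk]]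
  simp [nbesselTerm, hΓ]

lemma ae_nbessel_mul_sqrt (α β l v : ℝ) :
    (fun u => nbessel l (v * √u)) =ᵐ[betaMeasure α β]
      fun u => Gamma (l + 1) * ∑' k, nbesselTerm l v k * u ^ k :=
  (ae_betaMeasure_mem_Ioo α β).mono fun _ hu => nbessel_mul_sqrt l v hu.1.le

lemma integrable_nbessel_mul_sqrt {α β : ℝ} (hα : 0 < α) (hβ : 0 < β) (l v : ℝ) :
    Integrable (fun u => nbessel l (v * √u)) (betaMeasure α β) := by
  have := isProbabilityMeasureBeta hα hβ
  exact ((integrable_tsum_mul_pow (ae_betaMeasure_abs_le_one α β)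
    (summable_nbesselTerm l v)).const_mul _).congr (ae_nbessel_mul_sqrt α β l v).symm

lemma integral_nbessel_mul_sqrt_betaMeasure {l ν : ℝ} (hν : -1 < ν) (hl : 0 < l) (v : ℝ) :
    ∫ u, nbessel ν (v * √u) ∂betaMeasure (ν + 1) l = nbessel (ν + l) v := by
  have hν' : 0 < ν + 1 := by linarith
  have := isProbabilityMeasureBeta hν' hl
  rw [integral_congr_ae (ae_nbessel_mul_sqrt _ _ ν v), integral_const_mul,
    integral_tsum_mul_pow (ae_betaMeasure_abs_le_one _ _) (summable_nbesselTerm ν v),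
    nbessel_eq_Gamma_mul_tsum, ← tsum_mul_left, ← tsum_mul_left]
  congr with k
  have e₁ : (k : ℝ) + ν + 1 = ν + 1 + k := by ring
  have e₂ : (k : ℝ) + (ν + l) + 1 = ν + 1 + k + l := by ring
  have e₃ : ν + l + 1 = ν + 1 + l := by ring
  rw [integral_pow_betaMeasure hν' hl, beta, beta, nbesselTerm, nbesselTerm, e₁, e₂, e₃]
  have := (Gamma_pos_of_pos hν').ne'
  have := (Gamma_pos_of_pos hl).ne'
  have := (Gamma_pos_of_pos (by positivity : 0 < ν + 1 + k)).ne'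
  have := (Gamma_pos_of_pos (by positivity : 0 < ν + 1 + l)).ne'
  field_simp

lemma integral_exp_int_mul_I (n : ℤ) :
    ∫ θ in (-π)..π, Complex.exp (n * θ * I) = if n = 0 then 2 * (π : ℂ) else 0 := by
  split_ifs with hn
  · simp [hn, two_mul]
  · have hc : (n * I : ℂ) ≠ 0 := by simp [hn]
    have hper : Complex.exp (n * I * π) = Complex.exp (n * I * (-π : ℝ)) :=
      Complex.exp_eq_exp_iff_exists_int.2 ⟨n, by push_cast; ring⟩
    simp only [mul_right_comm (n : ℂ) _ I]
    rw [integral_exp_mul_complex hc, hper, sub_self, zero_div]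

lemma integral_eq_tsum_of_hasSum_exp {ι : Type*} [Countable ι] {c : ι → ℂ} (n : ι → ℤ)
    {f : ℝ → ℂ} (hc : Summable c)
    (hf : ∀ θ : ℝ, HasSum (fun i => c i * Complex.exp (n i * θ * I)) (f θ)) :
    ∫ θ in (-π)..π, f θ = ∑' i, c i * if n i = 0 then 2 * (π : ℂ) else 0 := by
  have hsum := intervalIntegral.hasSum_integral_of_dominated_convergence
    (F := fun i (θ : ℝ) => c i * Complex.exp (n i * θ * I)) (f := f)
    (μ := volume) (a := -π) (b := π) (fun i _ => ‖c i‖)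
    (fun i => (by fun_prop : Continuous _).aestronglyMeasurable)
    (fun i => .of_forall fun θ _ => by
      rw [norm_mul, ← Complex.ofReal_intCast, ← Complex.ofReal_mul,
        Complex.norm_exp_ofReal_mul_I, mul_one])
    (.of_forall fun _ _ => hc.norm) intervalIntegrable_const (.of_forall fun θ _ => hf θ)
  simp only [← hsum.tsum_eq, intervalIntegral.integral_const_mul, integral_exp_int_mul_I]

lemma summable_pow_div_factorial_mul_pow_div_factorial (z w : ℂ) :
    Summable fun x : ℕ × ℕ => z ^ x.1 / (x.1)! * (w ^ x.2 / (x.2)!) :=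
  summable_mul_of_summable_norm (f := fun n : ℕ => z ^ n / n !) (g := fun n : ℕ => w ^ n / n !)
    (NormedSpace.norm_expSeries_div_summable z) (NormedSpace.norm_expSeries_div_summable w)

lemma hasSum_exp_two_mul_cos_mul_exp (p : ℂ) (m : ℕ) (θ : ℝ) :
    HasSum (fun x : ℕ × ℕ => p ^ x.1 / (x.1)! * (p ^ x.2 / (x.2)!) *
        Complex.exp ((x.1 - x.2 + m : ℤ) * θ * I))
      (Complex.exp (2 * p * cos θ) * Complex.exp (m * θ * I)) := by
  have hexp (z : ℂ) : HasSum (fun n : ℕ => z ^ n / n !) (Complex.exp z) := by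
    rw [Complex.exp_eq_exp_ℂ]
    exact NormedSpace.expSeries_div_hasSum_exp z
  set z := p * Complex.exp (θ * I) with hz
  set w := p * Complex.exp (-θ * I) with hw
  have hzw : Complex.exp (2 * p * cos θ) = Complex.exp z * Complex.exp w := by
    rw [← Complex.exp_add, hz, hw, Complex.ofReal_cos, Complex.cos]
    ring_nf
  rw [hzw]
  refine (((hexp z).mul (hexp w)
    (summable_pow_div_factorial_mul_pow_div_factorial z w)).mul_right _).congr_fun fun x => ?_
  have hphase : Complex.exp ((x.1 - x.2 + m : ℤ) * θ * I) =
      Complex.exp (θ * I) ^ x.1 * Complex.exp (-θ * I) ^ x.2 * Complex.exp (m * θ * I) := by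
    simp only [← Complex.exp_nat_mul, ← Complex.exp_add]
    congr 1
    push_cast
    ring
  rw [hphase, hz, hw, mul_pow, mul_pow]
  ring

lemma integral_exp_two_mul_cos_mul_exp (p : ℂ) (m : ℕ) :
    ∫ θ in (-π)..π, Complex.exp (2 * p * cos θ) * Complex.exp (m * θ * I) =
      2 * π * ∑' k : ℕ, p ^ k / k ! * (p ^ (k + m) / (k + m)!) := by
  have hinj : Function.Injective fun k : ℕ => (k, k + m) := fun _ _ h => congrArg Prod.fst h
  rw [integral_eq_tsum_of_hasSum_exp (fun x : ℕ × ℕ => x.1 - x.2 + m)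
    (summable_pow_div_factorial_mul_pow_div_factorial p p)
    (hasSum_exp_two_mul_cos_mul_exp p m), ← hinj.tsum_eq, ← tsum_mul_left]
  · congr with k
    rw [if_pos (by push_cast; ring), mul_comm]
  · intro x hx
    have h0 : (x.1 - x.2 + m : ℤ) = 0 := by
      by_contra h
      simp [h] at hx
    exact ⟨x.1, Prod.ext rfl (by dsimp only; omega)⟩

lemma integral_mul_exp_eq_integral_mul_cos {f : ℝ → ℂ} (hf : Continuous f) (heven : f.Even)
    (a c : ℝ) :
    ∫ x in (-a)..a, f x * Complex.exp (c * x * I) = ∫ x in (-a)..a, f x * cos (c * x) := by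
  have hsin : ∫ x in (-a)..a, f x * sin (c * x) = 0 := by
    have h := intervalIntegral.integral_comp_neg (a := -a) (b := a)
      fun x => f x * (sin (c * x) : ℂ)
    simp only [heven _, mul_neg, sin_neg, Complex.ofReal_neg, intervalIntegral.integral_neg,
      neg_neg] at h
    exact self_eq_neg.1 h.symm
  have hsplit (x : ℝ) : f x * Complex.exp (c * x * I) =
      f x * cos (c * x) + f x * sin (c * x) * I := by
    rw [Complex.exp_mul_I]
    push_cast
    ring
  simp only [hsplit]
  rw [intervalIntegral.integral_add ((by fun_prop : Continuous _).intervalIntegrable _ _)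
    ((by fun_prop : Continuous _).intervalIntegrable _ _), intervalIntegral.integral_mul_const,
    hsin, zero_mul, add_zero]

/-- The Bessel function `J_m` of the first kind, of natural order `m`, obtained from the normalized
function `j_m`; its Bessel integral is the source of the bound on the kernel. -/
noncomputable def besselJ (m : ℕ) (v : ℝ) : ℝ :=
  (v / 2) ^ m / m ! * nbessel m v

lemma besselJ_zero_left (v : ℝ) : besselJ 0 v = nbessel 0 v := by
  simp [besselJ]

lemma neg_I_pow_mul_besselJ (m : ℕ) (v : ℝ) :
    (-I) ^ m * besselJ m v = ∑' k : ℕ, (-I * (v / 2)) ^ k / k ! *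
      ((-I * (v / 2)) ^ (k + m) / (k + m)!) := by
  rw [besselJ, nbessel_eq_Gamma_mul_tsum, Gamma_nat_eq_factorial]
  push_cast
  rw [← tsum_mul_left, ← tsum_mul_left, ← tsum_mul_left]
  congr with k
  have hΓ : Gamma (k + m + 1) = (k + m)! := by exact_mod_cast Gamma_nat_eq_factorial (k + m)
  have hI : (-I) ^ (2 * k) = (-1) ^ k := by rw [pow_mul, neg_sq, Complex.I_sq]
  have := m.factorial_ne_zero
  rw [nbesselTerm, hΓ]
  push_cast
  rw [← hI]
  simp only [mul_pow]
  field_simp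
  ring

lemma integral_exp_neg_I_mul_cos_mul_cos (m : ℕ) (v : ℝ) :
    ∫ θ in (-π)..π, Complex.exp (-I * v * cos θ) * cos (m * θ) =
      2 * π * ((-I) ^ m * besselJ m v) := by
  have heven : Function.Even fun θ : ℝ => Complex.exp (-I * v * cos θ) := fun θ => by
    simp only [cos_neg]
  have h := integral_exp_two_mul_cos_mul_exp (-I * (v / 2)) m
  rw [show 2 * (-I * (v / 2 : ℂ)) = -I * v by ring] at h
  rw [neg_I_pow_mul_besselJ, ← h, ← integral_mul_exp_eq_integral_mul_cos (by fun_prop) heven]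
  rfl

lemma integral_one_add_mul_cos_nat_mul (δ : ℝ) {m : ℕ} (hm : m ≠ 0) :
    ∫ θ in (-π)..π, (1 + δ * cos (m * θ)) = 2 * π := by
  rw [intervalIntegral.integral_add intervalIntegrable_const
    ((by fun_prop : Continuous _).intervalIntegrable _ _), intervalIntegral.integral_const_mul,
    intervalIntegral.integral_comp_mul_left (fun x => cos x) (Nat.cast_ne_zero.2 hm), integral_cos]
  simp [sin_nat_mul_pi, two_mul]

lemma norm_besselJ_zero_add_le_one {δ : ℝ} (hδ : |δ| ≤ 1) {m : ℕ} (hm : m ≠ 0) (v : ℝ) :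
    ‖(besselJ 0 v : ℂ) + δ * ((-I) ^ m * besselJ m v)‖ ≤ 1 := by
  -- The sum is the mean of the unimodular `exp (-i v cos θ)` against the density
  -- `1 + δ cos (m θ)`, which is nonnegative and has mean one.
  have hmean : ∫ θ in (-π)..π, Complex.exp (-I * v * cos θ) * (1 + δ * cos (m * θ) : ℝ) =
      2 * π * (besselJ 0 v + δ * ((-I) ^ m * besselJ m v)) := by
    have h₀ := integral_exp_neg_I_mul_cos_mul_cos 0 v
    have h₁ := integral_exp_neg_I_mul_cos_mul_cos m v
    simp only [Nat.cast_zero, zero_mul, cos_zero, Complex.ofReal_one, mul_one, pow_zero,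
      one_mul] at h₀
    rw [mul_add, ← h₀, mul_left_comm, ← h₁, ← intervalIntegral.integral_const_mul,
      ← intervalIntegral.integral_add ((by fun_prop : Continuous _).intervalIntegrable _ _)
        ((by fun_prop : Continuous _).intervalIntegrable _ _)]
    congr with θ
    push_cast
    ring
  have hnorm (θ : ℝ) :
      ‖Complex.exp (-I * v * cos θ) * (1 + δ * cos (m * θ) : ℝ)‖ = 1 + δ * cos (m * θ) := by
    have hcos : |δ * cos (m * θ)| ≤ 1 := by
      rw [abs_mul]
      exact mul_le_one₀ hδ (abs_nonneg _) (abs_cos_le_one _)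
    rw [norm_mul, show -I * v * cos θ = (-(v * cos θ) : ℝ) * I by push_cast; ring,
      Complex.norm_exp_ofReal_mul_I, one_mul, Complex.norm_of_nonneg (by linarith [abs_le.1 hcos])]
  have hle := intervalIntegral.norm_integral_le_integral_norm (μ := volume)
    (f := fun θ => Complex.exp (-I * v * cos θ) * (1 + δ * cos (m * θ) : ℝ))
    (by linarith [pi_pos] : -π ≤ π)
  simp only [hnorm] at hle
  rw [hmean, integral_one_add_mul_cos_nat_mul δ hm, norm_mul, ← Complex.ofReal_ofNat,
    ← Complex.ofReal_mul, Complex.norm_of_nonneg (by positivity)] at hle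
  exact le_of_mul_le_mul_left (hle.trans_eq (mul_one _).symm) (by positivity)

lemma sqrt_pow_mul_besselJ_mul_sqrt (m : ℕ) (v : ℝ) {u : ℝ} (hu : 0 ≤ u) :
    √u ^ m * besselJ m (v * √u) = (v / 2) ^ m / m ! * (u ^ (m : ℝ) • nbessel m (v * √u)) := by
  have hpow : u ^ m = √u ^ m * √u ^ m := by rw [← mul_pow, mul_self_sqrt hu]
  rw [besselJ, smul_eq_mul, rpow_natCast, hpow, mul_div_right_comm, mul_pow]
  ring

lemma ae_sqrt_pow_mul_besselJ_mul_sqrt (α β : ℝ) (m : ℕ) (v : ℝ) :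
    (fun u => √u ^ m * besselJ m (v * √u)) =ᵐ[betaMeasure α β]
      fun u => (v / 2) ^ m / m ! * (u ^ (m : ℝ) • nbessel m (v * √u)) :=
  (ae_betaMeasure_mem_Ioo α β).mono fun _ hu => sqrt_pow_mul_besselJ_mul_sqrt m v hu.1.le

lemma integrable_sqrt_pow_mul_besselJ_mul_sqrt {l : ℝ} (hl : 0 < l) (m : ℕ) (v : ℝ) :
    Integrable (fun u => √u ^ m * besselJ m (v * √u)) (betaMeasure 1 l) := by
  have hle : ∀ᵐ u ∂betaMeasure 1 l, ‖u ^ (m : ℝ)‖ ≤ 1 :=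
    (ae_betaMeasure_abs_le_one 1 l).mono fun u hu => by
      rw [rpow_natCast]
      exact norm_pow_le_one_of_abs_le_one hu m
  exact (((integrable_nbessel_mul_sqrt one_pos hl m v).bdd_smul 1 (by fun_prop) hle).const_mul
    _).congr (ae_sqrt_pow_mul_besselJ_mul_sqrt 1 l m v).symm

lemma integral_sqrt_pow_mul_besselJ_mul_sqrt {l : ℝ} (hl : 0 < l) (m : ℕ) (v : ℝ) :
    ∫ u, √u ^ m * besselJ m (v * √u) ∂betaMeasure 1 l =
      (v / 2) ^ m * (Gamma (l + 1) / Gamma (l + 1 + m)) * nbessel (l + m) v := by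
  have hm : (-1 : ℝ) < m := by linarith [m.cast_nonneg (α := ℝ)]
  have hbeta : beta (m + 1) l / beta 1 l = m ! * (Gamma (l + 1) / Gamma (l + 1 + m)) := by
    have hΓ := (Gamma_pos_of_pos hl).ne'
    have hsum : (m : ℝ) + 1 + l = l + 1 + m := by ring
    rw [beta, beta, Gamma_nat_eq_factorial, Gamma_one, add_comm 1 l, hsum]
    field_simp
  rw [integral_congr_ae (ae_sqrt_pow_mul_besselJ_mul_sqrt 1 l m v), integral_const_mul,
    integral_rpow_smul_betaMeasure one_pos (by positivity) hl, add_comm (1 : ℝ) m,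
    integral_nbessel_mul_sqrt_betaMeasure hm hl, hbeta, add_comm (m : ℝ) l, smul_eq_mul]
  have := m.factorial_ne_zero
  field_simp

lemma norm_nbessel_add_le_one_of_pos {l : ℝ} (hl : 0 < l) {δ : ℝ} (hδ : |δ| ≤ 1) {m : ℕ}
    (hm : m ≠ 0) (v : ℝ) :
    ‖(nbessel l v : ℂ) + δ * ((-I) ^ m *
      ((v / 2) ^ m * (Gamma (l + 1) / Gamma (l + 1 + m)) * nbessel (l + m) v : ℝ))‖ ≤ 1 := by
  have := isProbabilityMeasureBeta one_pos hl
  have hJ (n : ℕ) : Integrable (fun u => ((√u ^ n * besselJ n (v * √u) : ℝ) : ℂ))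
      (betaMeasure 1 l) := (integrable_sqrt_pow_mul_besselJ_mul_sqrt hl n v).ofReal
  have h₀ : nbessel l v = ∫ u, √u ^ 0 * besselJ 0 (v * √u) ∂betaMeasure 1 l := by
    have hΓ := (Gamma_pos_of_pos (by positivity : 0 < l + 1)).ne'
    rw [integral_sqrt_pow_mul_besselJ_mul_sqrt hl]
    simp [hΓ]
  rw [h₀, ← integral_sqrt_pow_mul_besselJ_mul_sqrt hl, ← integral_complex_ofReal,
    ← integral_complex_ofReal, ← integral_const_mul, ← integral_const_mul,
    ← integral_add (hJ 0) (((hJ m).const_mul _).const_mul _)]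
  refine (norm_integral_le_of_norm_le_const (C := 1)
    ((ae_betaMeasure_mem_Ioo 1 l).mono fun u hu => ?_)).trans (by simp)
  have hδu : |δ * √u ^ m| ≤ 1 := by
    rw [abs_mul, abs_of_nonneg (by positivity : 0 ≤ √u ^ m)]
    exact mul_le_one₀ hδ (by positivity) (pow_le_one₀ (sqrt_nonneg u) (sqrt_le_one.2 hu.2.le))
  refine (congrArg norm ?_).trans_le (norm_besselJ_zero_add_le_one hδu hm (v * √u))
  push_cast
  ring

lemma norm_nbessel_add_le_one {l : ℝ} (hl : 0 ≤ l) {δ : ℝ} (hδ : |δ| ≤ 1) {m : ℕ}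
    (hm : m ≠ 0) (v : ℝ) :
    ‖(nbessel l v : ℂ) + δ * ((-I) ^ m *
      ((v / 2) ^ m * (Gamma (l + 1) / Gamma (l + 1 + m)) * nbessel (l + m) v : ℝ))‖ ≤ 1 := by
  obtain rfl | hl := hl.eq_or_lt
  · have hJ : (v / 2) ^ m * (Gamma (0 + 1) / Gamma (0 + 1 + m)) * nbessel (0 + m) v =
        besselJ m v := by
      rw [besselJ, zero_add, zero_add, add_comm 1 (m : ℝ), Gamma_one, Gamma_nat_eq_factorial,
        mul_one_div]
    rw [hJ, ← besselJ_zero_left]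
    exact norm_besselJ_zero_add_le_one hδ hm v
  · exact norm_nbessel_add_le_one_of_pos hl hδ hm v

section GeneralizedFourier

variable {a κ : ℝ}

lemma exp_neg_pi_div_mul_I {R : ℕ} (hR : (R : ℝ) = 2 / a) :
    Complex.exp (-(π / a) * I) = (-I) ^ R := by
  have hRc : (R : ℂ) = 2 / a := by exact_mod_cast hR
  have harg : (-(π / a) * I : ℂ) = R * (-(π / 2 * I)) := by
    rw [hRc]
    ring
  rw [harg, Complex.exp_nat_mul, Complex.exp_neg, Complex.exp_pi_div_two_mul_I, Complex.inv_I]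

lemma two_div_mul_rpow_div_two_pow (ha : 0 < a) {R : ℕ} (hR : (R : ℝ) = 2 / a) {y : ℝ}
    (hy : 0 ≤ y) : (2 / a * y ^ (a / 2) / 2) ^ R = a ^ (-(2 / a)) * y := by
  have hbase : 2 / a * y ^ (a / 2) / 2 = a⁻¹ * y ^ (a / 2) := by field_simp
  have hexponent : a / 2 * (2 / a) = 1 := by field_simp
  rw [hbase, ← rpow_natCast, hR, mul_rpow (by positivity) (by positivity), ← rpow_mul hy,
    hexponent, rpow_one, inv_rpow ha.le, rpow_neg ha.le]

lemma bker_eq_nbessel_add (ha : 0 < a) {R : ℕ} (hR : (R : ℝ) = 2 / a) (x : ℝ) {l v : ℝ}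
    (hl : l = (2 * κ - 1) / a) (hv : v = 2 / a * |x| ^ (a / 2)) :
    bker κ a x = nbessel l v + (SignType.sign x : ℝ) * ((-I) ^ R *
      ((v / 2) ^ R * (Gamma (l + 1) / Gamma (l + 1 + R)) * nbessel (l + R) v : ℝ)) := by
  have hx : (x : ℂ) = (SignType.sign x : ℝ) * (|x| : ℝ) := by
    rw [← Complex.ofReal_mul, sign_mul_abs]
  have hpow : (v / 2) ^ R = a ^ (-(2 / a)) * |x| := by
    rw [hv, two_div_mul_rpow_div_two_pow ha hR (abs_nonneg x)]
  rw [hpow, bker, ← hl, ← hv, exp_neg_pi_div_mul_I hR, hR]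
  rw [hx]
  push_cast
  ring

lemma norm_bker_le_one (ha : 0 < a) (haN : ∃ R : ℕ, (R : ℝ) = 2 / a) (hκ : 1 / 2 ≤ κ)
    (x : ℝ) : ‖bker κ a x‖ ≤ 1 := by
  obtain ⟨R, hR⟩ := haN
  have hR0 : R ≠ 0 := by
    rw [← Nat.cast_ne_zero (R := ℝ), hR]
    positivity
  have hsign : |(SignType.sign x : ℝ)| ≤ 1 := by
    cases SignType.sign x <;> simp
  rw [bker_eq_nbessel_add ha hR x rfl rfl]
  exact norm_nbessel_add_le_one (div_nonneg (by linarith) ha.le) hsign hR0 _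

lemma bker_zero (ha : 0 < a) (h : 1 < 2 * κ + a) : bker κ a 0 = 1 := by
  have hl : -1 < (2 * κ - 1) / a := by
    rw [lt_div_iff₀ ha]
    linarith
  have hv : 2 / a * |(0 : ℝ)| ^ (a / 2) = 0 := by
    rw [abs_zero, zero_rpow (by positivity), mul_zero]
  rw [bker, hv, nbessel_zero hl]
  simp

end GeneralizedFourier

theorem stmt0_general (a κ : ℝ) (ha0 : 0 < a) (haN : ∃ R : ℕ, (R : ℝ) = 2 / a) (hκ : 1 / 2 ≤ κ) :
    (∀ x : ℝ, ‖bker κ a x‖ ≤ 1) ∧ bker κ a 0 = 1 ∧ (⨆ x : ℝ, ‖bker κ a x‖) = 1 := by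
  have hle := norm_bker_le_one ha0 haN hκ
  have hzero : bker κ a 0 = 1 := bker_zero ha0 (by linarith)
  refine ⟨hle, hzero, le_antisymm (ciSup_le hle) ?_⟩
  exact le_ciSup_of_le ⟨1, Set.forall_mem_range.2 hle⟩ 0 (by simp [hzero])

/-- for 0 < a ≤ 1 with 2/a a natural number and κ ≥ 1/2, the kernel
satisfies |b| ≤ 1 everywhere, b(0) = 1, and the sup of |b| equals 1. -/
theorem stmt0 (a κ : ℝ) (ha0 : 0 < a) (ha1 : a ≤ 1)
    (haN : ∃ R : ℕ, (R : ℝ) = 2 / a) (hκ : 1 / 2 ≤ κ) :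
    (∀ x : ℝ, ‖bker κ a x‖ ≤ 1) ∧ bker κ a 0 = 1 ∧ (⨆ x : ℝ, ‖bker κ a x‖) = 1 :=
  stmt0_general a κ ha0 haN hκ
end

section
/- For every integer r ≥ 0, every real λ > −1/2 and every v ∈ ℝ, one has e_{2r+1}(v,λ) = c_λ ∫_{−1}^{1} (1−t²)^{λ−1/2} q_{2r+1}(t,λ) e^{−ivt} dt, where q_{2r+1}(t,λ) = 1 + t · Σ_{s=0}^{r} (−1)^s · binom(r,s) · ((λ+r+1)_s/(λ+1/2)_s) · (1−t²)^s. -/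
open Real MeasureTheory Finset

/-- Pochhammer symbol (z)_n = z(z+1)...(z+n-1), with (z)_0 = 1. -/
noncomputable def poch (z : ℝ) (n : ℕ) : ℝ := ∏ i ∈ Finset.range n, (z + i)

/-- The constant c_lambda = Gamma(lambda+1)/(sqrt(pi) Gamma(lambda+1/2)). -/
noncomputable def cgeg (l : ℝ) : ℝ :=
  Real.Gamma (l + 1) / (Real.sqrt Real.pi * Real.Gamma (l + 1 / 2))

/-- The function e_{2r+1}(v, lambda). -/
noncomputable def e2r1 (r : ℕ) (l : ℝ) (v : ℝ) : ℂ :=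
  (nbessel l v : ℂ) + Complex.I * (-1 : ℂ) ^ (r + 1) *
    ((v ^ (2 * r + 1) / (2 ^ (2 * r + 1) * poch (l + 1) (2 * r + 1)) : ℝ) : ℂ) *
    (nbessel (l + (2 * r + 1)) v : ℂ)

/-- The polynomial q_{2r+1}(t, lambda). -/
noncomputable def qOdd (r : ℕ) (l : ℝ) (t : ℝ) : ℝ :=
  1 + t * ∑ s ∈ Finset.range (r + 1), (-1 : ℝ) ^ s * (r.choose s : ℝ) *
    (poch (l + r + 1) s / poch (l + 1 / 2) s) * (1 - t ^ 2) ^ s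

/-!
The density `c_a (1 - t²) ^ (a - 1/2)` has total mass one, by Euler's beta integral and Legendre's
duplication formula. Integration by parts against it trades a factor `t` for a derivative and raises
`a` by one; this determines its moments, and summing them gives Poisson's integral for `j_a`. Each
power of `1 - t²` in `q_{2r+1}` also raises `a` by one, so the terms of the sum become multiples of
`v j_{λ+1+s}(v)`. What remains is a finite identity between Bessel functions; comparing coefficients
of `v ^ (2k)`, it is the Chu–Vandermonde identity, whose right-hand side contains
`k (k-1) ⋯ (k-r+1)`: the coefficients with `k < r` cancel and the others add up to `j_{λ+2r+1}`.
-/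

open scoped Nat

lemma poch_eq_ascPochhammer_eval (z : ℝ) (n : ℕ) : poch z n = (ascPochhammer ℝ n).eval z := by
  induction n with
  | zero => simp [poch]
  | succ n ih => rw [ascPochhammer_succ_eval, ← ih, poch, Finset.prod_range_succ, poch]

lemma poch_zero (z : ℝ) : poch z 0 = 1 := Finset.prod_range_zero _

lemma poch_one (z : ℝ) : poch z 1 = z := by simp [poch]

lemma poch_succ (z : ℝ) (n : ℕ) : poch z (n + 1) = poch z n * (z + n) :=
  Finset.prod_range_succ _ n

lemma poch_add (z : ℝ) (m n : ℕ) : poch z (m + n) = poch z m * poch (z + m) n := by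
  simp only [poch, Finset.prod_range_add, Nat.cast_add, add_assoc]

lemma poch_succ' (z : ℝ) (n : ℕ) : poch z (n + 1) = z * poch (z + 1) n := by
  rw [add_comm n, poch_add, poch_one, Nat.cast_one]

lemma poch_pos {z : ℝ} (hz : 0 < z) (n : ℕ) : 0 < poch z n :=
  Finset.prod_pos fun _ _ => by positivity

lemma poch_sub_add_one_eq_descFactorial (n k : ℕ) :
    poch ((n : ℝ) - k + 1) k = n.descFactorial k := by
  rw [poch_eq_ascPochhammer_eval, ← descPochhammer_eval_eq_ascPochhammer,
    descPochhammer_eval_eq_descFactorial]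

lemma Gamma_add_natCast {z : ℝ} (hz : 0 < z) (n : ℕ) :
    Real.Gamma (z + n) = poch z n * Real.Gamma z := by
  induction n with
  | zero => simp [poch_zero]
  | succ n ih =>
    rw [Nat.cast_succ, ← add_assoc, Real.Gamma_add_one (by positivity), ih, poch_succ]
    ring

lemma sum_choose_mul_ascPochhammer_eval {R : Type*} [CommRing R] (n : ℕ) (b c : R) :
    ∑ s ∈ range (n + 1), (-1) ^ s * (n.choose s : R) *
        ((ascPochhammer R s).eval b * (ascPochhammer R (n - s)).eval (c + s)) =
      (ascPochhammer R n).eval (c - b) := by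
  -- Chu–Vandermonde for falling factorials at `-b` and `c + n - 1`; reflecting each of them into
  -- a rising factorial produces the signs.
  have h := Ring.descPochhammer_smeval_add (r := -b) (s := c + n - 1) n (Commute.all _ _)
  rw [Nat.sum_antidiagonal_eq_sum_range_succ_mk] at h
  simp only [Polynomial.descPochhammer_smeval_eq_ascPochhammer,
    Polynomial.ascPochhammer_smeval_eq_eval] at h
  convert h.symm using 1
  · refine Finset.sum_congr rfl fun s hs => ?_
    have hb := ascPochhammer_eval_neg_eq_descPochhammer R (-b) s
    rw [neg_neg, descPochhammer_eval_eq_ascPochhammer] at hb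
    rw [hb, Nat.cast_sub (Finset.mem_range_succ_iff.1 hs),
      show c + n - 1 - (n - s) + 1 = c + (s : R) by ring]
    have hsign : (-1 : R) ^ s * (-1) ^ s = 1 := by rw [← mul_pow, neg_one_mul, neg_neg, one_pow]
    linear_combination (n.choose s : R) * (ascPochhammer R s).eval (-b - s + 1) *
      (ascPochhammer R (n - s)).eval (c + s) * hsign
  · congr 1
    ring

lemma sum_choose_mul_poch_div_poch {n : ℕ} {c : ℝ} (hc : poch c n ≠ 0) (b : ℝ) :
    ∑ s ∈ range (n + 1), (-1 : ℝ) ^ s * (n.choose s : ℝ) * (poch b s / poch c s) =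
      poch (c - b) n / poch c n := by
  rw [eq_div_iff hc, poch_eq_ascPochhammer_eval (c - b), ← sum_choose_mul_ascPochhammer_eval,
    Finset.sum_mul]
  refine Finset.sum_congr rfl fun s hs => ?_
  have hsplit : poch c n = poch c s * poch (c + s) (n - s) := by
    rw [← poch_add, Nat.add_sub_cancel' (Finset.mem_range_succ_iff.1 hs)]
  have hcs : poch c s ≠ 0 := left_ne_zero_of_mul (hsplit ▸ hc)
  rw [hsplit, ← poch_eq_ascPochhammer_eval, ← poch_eq_ascPochhammer_eval]
  field_simp

lemma min_one_le_poch {z : ℝ} (hz : 0 < z) (n : ℕ) : min 1 z ≤ poch z n := by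
  rcases n with _ | n
  · exact (min_le_left 1 z).trans_eq (poch_zero z).symm
  · have htail : 1 ≤ poch (z + 1) n := Finset.one_le_prod fun i _ => by linarith
    rw [poch_succ']
    exact (min_le_right 1 z).trans (le_mul_of_one_le_right hz.le htail)

lemma summable_nbessel_term {a : ℝ} (ha : -1 < a) (v : ℝ) :
    Summable fun k : ℕ => (-1 : ℝ) ^ k / (k ! * poch (a + 1) k) * (v / 2) ^ (2 * k) := by
  have ha' : 0 < a + 1 := by linarith
  refine .of_norm_bounded
    ((Real.summable_pow_div_factorial ((v / 2) ^ 2)).mul_right (min 1 (a + 1))⁻¹) fun k => ?_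
  have hpos := poch_pos ha' k
  rw [norm_mul, norm_div, norm_pow, norm_neg, norm_one, one_pow, pow_mul, norm_pow,
    Real.norm_of_nonneg (sq_nonneg _), Real.norm_of_nonneg (by positivity), one_div_mul_eq_div,
    ← div_div, div_eq_mul_inv _ (poch (a + 1) k)]
  gcongr
  exact min_one_le_poch ha' k

lemma hasSum_nbessel {a : ℝ} (ha : -1 < a) (v : ℝ) :
    HasSum (fun k : ℕ => (-1 : ℝ) ^ k / (k ! * poch (a + 1) k) * (v / 2) ^ (2 * k))
      (nbessel a v) := by
  have ha' : 0 < a + 1 := by linarith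
  convert (summable_nbessel_term ha v).hasSum using 1
  rw [nbessel, ← tsum_mul_left]
  refine tsum_congr fun k => ?_
  rw [add_assoc, add_comm (k : ℝ), Gamma_add_natCast ha']
  field_simp

lemma sum_choose_mul_poch_div_poch_mul_poch {a : ℝ} (ha : -1 < a) (r k : ℕ) :
    ∑ s ∈ range (r + 1), (-1 : ℝ) ^ s * (r.choose s : ℝ) *
        (poch (a + r) s / (poch (a + 1) s * poch (a + s + 1) k)) =
      k.descFactorial r / poch (a + 1) (k + r) := by
  have ha' : 0 < a + 1 := by linarith
  have hak : 0 < a + 1 + k := by positivity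
  have hvandermonde := sum_choose_mul_poch_div_poch (poch_pos hak r).ne' (a + r)
  rw [show a + 1 + k - (a + r) = (k : ℝ) - r + 1 by ring, poch_sub_add_one_eq_descFactorial]
    at hvandermonde
  rw [poch_add, mul_comm (poch (a + 1) k), ← div_div, ← hvandermonde, Finset.sum_div]
  refine Finset.sum_congr rfl fun s _ => ?_
  rw [add_right_comm a, ← poch_add, add_comm s, poch_add, mul_comm (poch (a + 1) k)]
  ring

lemma hasSum_sum_choose_mul_nbessel {a : ℝ} (ha : -1 < a) (r : ℕ) (v : ℝ) :
    HasSum (fun k : ℕ =>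
        (-1) ^ k / k ! * (v / 2) ^ (2 * k) * (k.descFactorial r / poch (a + 1) (k + r)))
      (∑ s ∈ range (r + 1), (-1 : ℝ) ^ s * (r.choose s : ℝ) *
        (poch (a + r) s / poch (a + 1) s) * nbessel (a + s) v) := by
  have hshift (s : ℕ) : -1 < a + s := by linarith
  refine (hasSum_sum fun s _ => (hasSum_nbessel (hshift s) v).mul_left _).congr_fun fun k => ?_
  rw [← sum_choose_mul_poch_div_poch_mul_poch ha, Finset.mul_sum]
  refine Finset.sum_congr rfl fun s _ => ?_
  ring

lemma hasSum_descFactorial_mul_nbessel {a : ℝ} (ha : -1 < a) (r : ℕ) (v : ℝ) :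
    HasSum (fun k : ℕ =>
        (-1) ^ k / k ! * (v / 2) ^ (2 * k) * (k.descFactorial r / poch (a + 1) (k + r)))
      ((-1) ^ r * ((v / 2) ^ (2 * r) / poch (a + 1) (2 * r)) * nbessel (a + (2 * r : ℕ)) v) := by
  have hshift : -1 < a + (2 * r : ℕ) := by linarith
  rw [← (add_left_injective r).hasSum_iff fun k hk => ?_]
  · refine ((hasSum_nbessel hshift v).mul_left _).congr_fun fun m => ?_
    have hfac : (m ! : ℝ) * (m + r).descFactorial r = (m + r)! := by
      have := Nat.factorial_mul_descFactorial (Nat.le_add_left r m)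
      rw [Nat.add_sub_cancel] at this
      exact_mod_cast this
    have hpoch : poch (a + 1) (m + r + r) =
        poch (a + 1) (2 * r) * poch (a + (2 * r : ℕ) + 1) m := by
      rw [add_right_comm a, ← poch_add]
      ring_nf
    have hfac_ne : ((m + r)! : ℝ) ≠ 0 := by positivity
    rw [Function.comp_apply, hpoch, ← hfac]
    rw [← hfac] at hfac_ne
    field_simp
    ring
  · have hkr : k < r := not_le.1 fun h => hk ⟨k - r, Nat.sub_add_cancel h⟩
    rw [Nat.descFactorial_of_lt hkr, Nat.cast_zero, zero_div, mul_zero]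

lemma sum_choose_mul_nbessel {a : ℝ} (ha : -1 < a) (r : ℕ) (v : ℝ) :
    ∑ s ∈ range (r + 1), (-1 : ℝ) ^ s * (r.choose s : ℝ) *
        (poch (a + r) s / poch (a + 1) s) * nbessel (a + s) v =
      (-1) ^ r * ((v / 2) ^ (2 * r) / poch (a + 1) (2 * r)) * nbessel (a + (2 * r : ℕ)) v :=
  (hasSum_sum_choose_mul_nbessel ha r v).unique (hasSum_descFactorial_mul_nbessel ha r v)

lemma integral_one_sub_sq_cpow (s : ℂ) :
    ∫ t in (-1 : ℝ)..1, (1 - (t : ℂ) ^ 2) ^ (s - 1) =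
      2 ^ (2 * s - 1) * Complex.betaIntegral s s := by
  have hscaled := Complex.betaIntegral_scaled s s two_pos
  rw [← two_mul, Complex.ofReal_ofNat] at hscaled
  have hshift := intervalIntegral.integral_comp_sub_right (a := 0) (b := 2)
    (fun t : ℝ => (1 - (t : ℂ) ^ 2) ^ (s - 1)) 1
  rw [zero_sub, show (2 : ℝ) - 1 = 1 by norm_num] at hshift
  rw [← hscaled, ← hshift]
  refine intervalIntegral.integral_congr fun x hx => ?_
  rw [Set.uIcc_of_le zero_le_two] at hx
  have hx2 : 0 ≤ 2 - x := sub_nonneg.2 hx.2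
  have hfactor : (1 : ℂ) - ((x - 1 : ℝ) : ℂ) ^ 2 = (x : ℂ) * ((2 - x : ℝ) : ℂ) := by
    push_cast
    ring
  simp only [hfactor]
  rw [Complex.mul_cpow_ofReal_nonneg hx.1 hx2]
  push_cast
  rfl

lemma integral_one_sub_sq_cpow_eq_Gamma_div {s : ℂ} (hs : 0 < s.re) :
    ∫ t in (-1 : ℝ)..1, (1 - (t : ℂ) ^ 2) ^ (s - 1) =
      √π * Complex.Gamma s / Complex.Gamma (s + 1 / 2) := by
  have hs2 : 0 < (2 * s).re := by simpa using hs
  have hshalf : 0 < (s + 1 / 2).re := by norm_num [Complex.add_re]; linarith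
  have hΓ2 := Complex.Gamma_ne_zero_of_re_pos hs2
  have hΓhalf := Complex.Gamma_ne_zero_of_re_pos hshalf
  have hpow : (2 : ℂ) ^ (2 * s - 1) * 2 ^ (1 - 2 * s) = 1 := by
    rw [← Complex.cpow_add _ _ two_ne_zero, sub_add_sub_cancel, sub_self, Complex.cpow_zero]
  rw [integral_one_sub_sq_cpow, Complex.betaIntegral_eq_Gamma_mul_div s s hs hs, ← two_mul,
    eq_div_iff hΓhalf]
  calc 2 ^ (2 * s - 1) * (Complex.Gamma s * Complex.Gamma s / Complex.Gamma (2 * s)) *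
        Complex.Gamma (s + 1 / 2)
      = 2 ^ (2 * s - 1) * Complex.Gamma s * (Complex.Gamma s * Complex.Gamma (s + 1 / 2)) /
          Complex.Gamma (2 * s) := by ring
    _ = √π * Complex.Gamma s * (2 ^ (2 * s - 1) * 2 ^ (1 - 2 * s)) *
          (Complex.Gamma (2 * s) / Complex.Gamma (2 * s)) := by
        rw [Complex.Gamma_mul_Gamma_add_half]
        ring
    _ = √π * Complex.Gamma s := by rw [hpow, div_self hΓ2, mul_one, mul_one]

/-- The mean of `f` with respect to the Gegenbauer probability density `c_a (1 - t²) ^ (a - 1/2)`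
on `[-1, 1]`; it turns Poisson's integral for `j_a` into the characteristic function of that
density. As for any Bochner integral, it is `0` when `f` is not integrable for the density. -/
noncomputable def gegenbauerMean (a : ℝ) (f : ℝ → ℂ) : ℂ :=
  cgeg a * ∫ t in (-1 : ℝ)..1, (((1 - t ^ 2) ^ (a - 1 / 2) : ℝ) : ℂ) * f t

lemma one_sub_sq_pos {t : ℝ} (ht : t ∈ Set.Ioo (-1 : ℝ) 1) : 0 < 1 - t ^ 2 := by
  nlinarith [ht.1, ht.2]

lemma cgeg_add_natCast {a : ℝ} (ha : -(1 / 2 : ℝ) < a) (n : ℕ) :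
    cgeg (a + n) = cgeg a * (poch (a + 1) n / poch (a + 1 / 2) n) := by
  have ha₁ : 0 < a + 1 := by linarith
  have ha₂ : 0 < a + 1 / 2 := by linarith
  rw [cgeg, cgeg, add_right_comm, Gamma_add_natCast ha₁, add_right_comm a, Gamma_add_natCast ha₂]
  ring

lemma gegenbauerMean_one {a : ℝ} (ha : -(1 / 2 : ℝ) < a) : gegenbauerMean a (fun _ => 1) = 1 := by
  have ha₁ : 0 < a + 1 / 2 := by linarith
  have hcpow : ∫ t in (-1 : ℝ)..1, (((1 - t ^ 2) ^ (a - 1 / 2) : ℝ) : ℂ) * 1 =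
      ∫ t in (-1 : ℝ)..1, (1 - (t : ℂ) ^ 2) ^ (((a + 1 / 2 : ℝ) : ℂ) - 1) := by
    refine intervalIntegral.integral_congr_Ioo_of_le (by norm_num) fun t ht => ?_
    simp only [mul_one]
    rw [Complex.ofReal_cpow (one_sub_sq_pos ht).le]
    push_cast
    ring_nf
  have hΓ₂ := Real.Gamma_pos_of_pos (show 0 < a + 1 by linarith)
  rw [gegenbauerMean, hcpow, integral_one_sub_sq_cpow_eq_Gamma_div (by simpa using ha₁), cgeg,
    show ((a + 1 / 2 : ℝ) : ℂ) + 1 / 2 = (a + 1 : ℝ) by push_cast; ring, Complex.Gamma_ofReal,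
    Complex.Gamma_ofReal]
  norm_cast
  rw [div_mul_div_comm, mul_comm, div_self (by positivity)]

lemma intervalIntegrable_one_sub_sq_rpow {a : ℝ} (ha : -(1 / 2 : ℝ) < a) :
    IntervalIntegrable (fun t : ℝ => (((1 - t ^ 2) ^ (a - 1 / 2) : ℝ) : ℂ)) volume (-1) 1 := by
  refine intervalIntegral.intervalIntegrable_of_integral_ne_zero fun hzero => ?_
  have hmass := gegenbauerMean_one ha
  simp only [gegenbauerMean, mul_one, hzero, mul_zero, zero_ne_one] at hmass

lemma intervalIntegrable_one_sub_sq_rpow_mul {a : ℝ} (ha : -(1 / 2 : ℝ) < a) {f : ℝ → ℂ}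
    (hf : Continuous f) :
    IntervalIntegrable (fun t => (((1 - t ^ 2) ^ (a - 1 / 2) : ℝ) : ℂ) * f t) volume (-1) 1 :=
  (intervalIntegrable_one_sub_sq_rpow ha).mul_continuousOn hf.continuousOn

lemma gegenbauerMean_const_mul (a : ℝ) (c : ℂ) (f : ℝ → ℂ) :
    gegenbauerMean a (fun t => c * f t) = c * gegenbauerMean a f := by
  simp only [gegenbauerMean, mul_left_comm _ c, intervalIntegral.integral_const_mul]

lemma gegenbauerMean_add {a : ℝ} (ha : -(1 / 2 : ℝ) < a) {f g : ℝ → ℂ} (hf : Continuous f)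
    (hg : Continuous g) :
    gegenbauerMean a (fun t => f t + g t) = gegenbauerMean a f + gegenbauerMean a g := by
  simp only [gegenbauerMean, mul_add]
  rw [intervalIntegral.integral_add (intervalIntegrable_one_sub_sq_rpow_mul ha hf)
    (intervalIntegrable_one_sub_sq_rpow_mul ha hg), mul_add]

lemma gegenbauerMean_finsetSum {a : ℝ} (ha : -(1 / 2 : ℝ) < a) {ι : Type*} (s : Finset ι)
    {f : ι → ℝ → ℂ} (hf : ∀ i ∈ s, Continuous (f i)) :
    gegenbauerMean a (fun t => ∑ i ∈ s, f i t) = ∑ i ∈ s, gegenbauerMean a (f i) := by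
  simp only [gegenbauerMean, Finset.mul_sum]
  rw [intervalIntegral.integral_finsetSum fun i hi =>
    intervalIntegrable_one_sub_sq_rpow_mul ha (hf i hi), Finset.mul_sum]

lemma gegenbauerMean_eq_zero_of_odd (a : ℝ) {f : ℝ → ℂ} (hf : Function.Odd f) :
    gegenbauerMean a f = 0 := by
  have hreflect := intervalIntegral.integral_comp_neg (a := -1) (b := 1)
    fun t : ℝ => (((1 - t ^ 2) ^ (a - 1 / 2) : ℝ) : ℂ) * f t
  simp only [neg_sq, hf _, mul_neg, intervalIntegral.integral_neg, neg_neg] at hreflect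
  rw [gegenbauerMean, self_eq_neg.1 hreflect.symm, mul_zero]

lemma gegenbauerMean_one_sub_sq_pow_mul {a : ℝ} (ha : -(1 / 2 : ℝ) < a) (n : ℕ) (f : ℝ → ℂ) :
    gegenbauerMean a (fun t => ((1 - t ^ 2 : ℝ) : ℂ) ^ n * f t) =
      (poch (a + 1 / 2) n / poch (a + 1) n : ℝ) * gegenbauerMean (a + n) f := by
  have hp₁ := poch_pos (show 0 < a + 1 by linarith) n
  have hp₂ := poch_pos (show 0 < a + 1 / 2 by linarith) n
  have hweight : ∫ t in (-1 : ℝ)..1, (((1 - t ^ 2) ^ (a + n - 1 / 2) : ℝ) : ℂ) * f t =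
      ∫ t in (-1 : ℝ)..1, (((1 - t ^ 2) ^ (a - 1 / 2) : ℝ) : ℂ) *
        (((1 - t ^ 2 : ℝ) : ℂ) ^ n * f t) := by
    refine intervalIntegral.integral_congr_Ioo_of_le (by norm_num) fun t ht => ?_
    simp only [add_sub_right_comm a]
    rw [Real.rpow_add_natCast (one_sub_sq_pos ht).ne', Complex.ofReal_mul, Complex.ofReal_pow,
      mul_assoc]
  have hc : cgeg a = poch (a + 1 / 2) n / poch (a + 1) n * cgeg (a + n) := by
    rw [cgeg_add_natCast ha, mul_left_comm, div_mul_div_comm, mul_comm (poch (a + 1 / 2) n),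
      div_self (by positivity), mul_one]
  rw [gegenbauerMean, gegenbauerMean, hweight, hc, Complex.ofReal_mul, mul_assoc]

lemma hasDerivAt_one_sub_sq_rpow (p : ℝ) {t : ℝ} (ht : t ∈ Set.Ioo (-1 : ℝ) 1) :
    HasDerivAt (fun t : ℝ => (1 - t ^ 2) ^ p) (-2 * p * t * (1 - t ^ 2) ^ (p - 1)) t := by
  convert ((hasDerivAt_pow 2 t).const_sub 1).rpow_const (p := p) (.inl (one_sub_sq_pos ht).ne')
    using 1
  push_cast
  ring

lemma integral_one_sub_sq_rpow_mul_deriv {a : ℝ} (ha : -(1 / 2 : ℝ) < a) {f f' : ℝ → ℂ}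
    (hf : ∀ t, HasDerivAt f (f' t) t) (hf' : Continuous f') :
    ∫ t in (-1 : ℝ)..1, (((1 - t ^ 2) ^ (a + 1 / 2) : ℝ) : ℂ) * f' t =
      (2 * a + 1 : ℝ) * ∫ t in (-1 : ℝ)..1, (((1 - t ^ 2) ^ (a - 1 / 2) : ℝ) : ℂ) * (t * f t) := by
  have ha₂ : 0 < a + 1 / 2 := by linarith
  have hfc : Continuous f := continuous_iff_continuousAt.2 fun t => (hf t).continuousAt
  set w : ℝ → ℂ := fun t => (((1 - t ^ 2) ^ (a + 1 / 2) : ℝ) : ℂ) with hw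
  set w' : ℝ → ℂ := fun t => -(2 * a + 1 : ℝ) * ((((1 - t ^ 2) ^ (a - 1 / 2) : ℝ) : ℂ) * t) with hw'
  have hwc : Continuous w := Complex.continuous_ofReal.comp
    ((by fun_prop : Continuous fun t : ℝ => 1 - t ^ 2).rpow_const fun _ => .inr ha₂.le)
  have hderiv : ∀ t ∈ Set.Ioo (min (-1 : ℝ) 1) (max (-1) 1), HasDerivAt w (w' t) t := by
    intro t ht
    rw [min_eq_left (by norm_num), max_eq_right (by norm_num)] at ht
    convert (hasDerivAt_one_sub_sq_rpow (a + 1 / 2) ht).ofReal_comp using 1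
    rw [hw', add_sub_assoc, show (1 / 2 - 1 : ℝ) = -(1 / 2) by norm_num, ← sub_eq_add_neg]
    push_cast
    ring
  have hboundary : w 1 = 0 ∧ w (-1) = 0 := by
    simp [hw, -one_div, Real.zero_rpow ha₂.ne']
  have hparts := intervalIntegral.integral_mul_deriv_eq_deriv_mul_of_hasDerivAt
    hwc.continuousOn hfc.continuousOn hderiv (fun t _ => hf t)
    ((intervalIntegrable_one_sub_sq_rpow_mul ha Complex.continuous_ofReal).const_mul _)
    (hf'.intervalIntegrable _ _)
  rw [hparts, hboundary.1, hboundary.2, zero_mul, zero_mul, sub_zero, zero_sub,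
    ← intervalIntegral.integral_neg, ← intervalIntegral.integral_const_mul]
  refine intervalIntegral.integral_congr fun t _ => ?_
  simp only [hw']
  ring

lemma gegenbauerMean_ofReal_mul {a : ℝ} (ha : -(1 / 2 : ℝ) < a) {f f' : ℝ → ℂ}
    (hf : ∀ t, HasDerivAt f (f' t) t) (hf' : Continuous f') :
    gegenbauerMean a (fun t => t * f t) = (1 / (2 * (a + 1)) : ℝ) * gegenbauerMean (a + 1) f' := by
  have ha₁ : 0 < a + 1 := by linarith
  have ha₂ : 0 < 2 * a + 1 := by linarith
  have hc : cgeg a = 1 / (2 * (a + 1)) * cgeg (a + 1) * (2 * a + 1) := by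
    have hc' := cgeg_add_natCast ha 1
    rw [poch_one, poch_one, Nat.cast_one, show a + 1 / 2 = (2 * a + 1) / 2 by ring] at hc'
    rw [hc']
    field_simp
  rw [gegenbauerMean, gegenbauerMean, show a + 1 - 1 / 2 = a + 1 / 2 by ring,
    integral_one_sub_sq_rpow_mul_deriv ha hf hf', hc]
  push_cast
  ring

lemma gegenbauerMean_pow_two_mul {a : ℝ} (ha : -(1 / 2 : ℝ) < a) (k : ℕ) :
    gegenbauerMean a (fun t => (t : ℂ) ^ (2 * k)) =
      ((2 * k)! / (4 ^ k * k ! * poch (a + 1) k) : ℝ) := by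
  induction k generalizing a with
  | zero => simp [gegenbauerMean_one ha, poch_zero]
  | succ k ih =>
    have hderiv (t : ℝ) : HasDerivAt (fun t : ℝ => (t : ℂ) ^ (2 * k + 1))
        ((2 * k + 1 : ℕ) * (t : ℂ) ^ (2 * k)) t := by
      simpa using (hasDerivAt_id t).ofReal_comp.fun_pow (2 * k + 1)
    simp only [show 2 * (k + 1) = 2 * k + 1 + 1 by ring, pow_succ' _ (2 * k + 1)]
    rw [gegenbauerMean_ofReal_mul ha hderiv (by fun_prop), gegenbauerMean_const_mul,
      ih (by linarith), poch_succ', Nat.factorial_succ (2 * k + 1), Nat.factorial_succ (2 * k),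
      Nat.factorial_succ k]
    norm_cast
    push_cast
    field_simp
    ring

lemma gegenbauerMean_pow_two_mul_add_one (a : ℝ) (k : ℕ) :
    gegenbauerMean a (fun t => (t : ℂ) ^ (2 * k + 1)) = 0 :=
  gegenbauerMean_eq_zero_of_odd a fun t => by
    rw [Complex.ofReal_neg, (odd_two_mul_add_one k).neg_pow]

lemma hasSum_integral_mul_exp {a b : ℝ} {W : ℝ → ℂ} (hW : IntervalIntegrable W volume a b)
    (c : ℂ) :
    HasSum (fun n : ℕ => c ^ n / n ! * ∫ t in a..b, W t * (t : ℂ) ^ n)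
      (∫ t in a..b, W t * Complex.exp (c * t)) := by
  set M := max |a| |b|
  have hterm (n : ℕ) : c ^ n / n ! * ∫ t in a..b, W t * (t : ℂ) ^ n =
      ∫ t in a..b, W t * ((c * t) ^ n / n !) := by
    rw [← intervalIntegral.integral_const_mul]
    refine intervalIntegral.integral_congr fun t _ => ?_
    simp only [mul_pow]
    ring
  have hsum := Real.summable_pow_div_factorial (‖c‖ * M)
  simp only [hterm]
  refine intervalIntegral.hasSum_integral_of_dominated_convergence
    (fun n t => ‖W t‖ * ((‖c‖ * M) ^ n / n !)) (fun n => ?_)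
    (fun n => .of_forall fun t ht => ?_) (.of_forall fun t _ => hsum.mul_left _) ?_
    (.of_forall fun t _ => ?_)
  · exact hW.def'.aestronglyMeasurable.mul (Continuous.aestronglyMeasurable (by fun_prop))
  · have htM : |t| ≤ M := by
      rcases Set.mem_uIoc.1 ht with ⟨hat, htb⟩ | ⟨hbt, hta⟩
      · exact abs_le_max_abs_abs hat.le htb
      · exact (abs_le_max_abs_abs hbt.le hta).trans_eq (max_comm _ _)
    rw [norm_mul, norm_div, norm_pow, norm_mul, Complex.norm_real, Complex.norm_natCast,
      Real.norm_eq_abs]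
    gcongr
  · simp only [tsum_mul_left]
    exact hW.norm.mul_const _
  · rw [Complex.exp_eq_exp_ℂ]
    exact (NormedSpace.expSeries_div_hasSum_exp (c * t)).mul_left _

lemma hasSum_gegenbauerMean_exp {a : ℝ} (ha : -(1 / 2 : ℝ) < a) (c : ℂ) :
    HasSum (fun n : ℕ => c ^ n / n ! * gegenbauerMean a (fun t => (t : ℂ) ^ n))
      (gegenbauerMean a fun t => Complex.exp (c * t)) :=
  ((hasSum_integral_mul_exp (intervalIntegrable_one_sub_sq_rpow ha) c).mul_left _).congr_fun
    fun _ => mul_left_comm _ _ _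

lemma gegenbauerMean_exp {a : ℝ} (ha : -(1 / 2 : ℝ) < a) (v : ℝ) :
    gegenbauerMean a (fun t => Complex.exp (-Complex.I * v * t)) = nbessel a v := by
  have hsum := hasSum_gegenbauerMean_exp ha (-Complex.I * v)
  rw [← (mul_right_injective₀ two_ne_zero).hasSum_iff fun n hn => ?_] at hsum
  · have hbessel := Complex.hasSum_ofReal.2 (hasSum_nbessel (by linarith : -1 < a) v)
    refine hsum.unique (hbessel.congr_fun fun k => ?_)
    rw [Function.comp_apply, gegenbauerMean_pow_two_mul ha, mul_pow, pow_mul (-Complex.I), neg_sq,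
      Complex.I_sq, div_pow, pow_mul (2 : ℝ), show (2 : ℝ) ^ 2 = 4 by norm_num]
    have : ((2 * k)! : ℂ) ≠ 0 := by exact_mod_cast (2 * k).factorial_ne_zero
    push_cast
    field_simp
  · obtain ⟨k, rfl⟩ : Odd n :=
      Nat.not_even_iff_odd.1 fun h => hn ⟨n / 2, Nat.two_mul_div_two_of_even h⟩
    rw [gegenbauerMean_pow_two_mul_add_one, mul_zero]

lemma gegenbauerMean_ofReal_mul_exp {a : ℝ} (ha : -(1 / 2 : ℝ) < a) (v : ℝ) :
    gegenbauerMean a (fun t => t * Complex.exp (-Complex.I * v * t)) =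
      -Complex.I * (v / 2 / (a + 1) * nbessel (a + 1) v : ℝ) := by
  have hderiv (t : ℝ) : HasDerivAt (fun t : ℝ => Complex.exp (-Complex.I * v * t))
      (-Complex.I * v * Complex.exp (-Complex.I * v * t)) t := by
    simpa [mul_comm] using ((hasDerivAt_id t).ofReal_comp.const_mul (-Complex.I * v)).cexp
  rw [gegenbauerMean_ofReal_mul ha hderiv (by fun_prop), gegenbauerMean_const_mul,
    gegenbauerMean_exp (by linarith), ← div_div]
  push_cast
  ring

lemma gegenbauerMean_qOdd_mul {l : ℝ} (hl : -(1 / 2 : ℝ) < l) (r : ℕ) {f : ℝ → ℂ}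
    (hf : Continuous f) :
    gegenbauerMean l (fun t => qOdd r l t * f t) =
      gegenbauerMean l f + ∑ s ∈ range (r + 1),
        ((-1) ^ s * (r.choose s) * (poch (l + r + 1) s / poch (l + 1) s) : ℝ) *
          gegenbauerMean (l + s) (fun t => t * f t) := by
  have hexpand (t : ℝ) : qOdd r l t * f t = f t + ∑ s ∈ range (r + 1),
      ((-1) ^ s * (r.choose s) * (poch (l + r + 1) s / poch (l + 1 / 2) s) : ℝ) *
        (((1 - t ^ 2 : ℝ) : ℂ) ^ s * (t * f t)) := by
    rw [qOdd, Complex.ofReal_add, Complex.ofReal_one, add_mul, one_mul, Complex.ofReal_mul,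
      Complex.ofReal_sum, mul_right_comm, Finset.mul_sum]
    congr 1
    refine Finset.sum_congr rfl fun s _ => ?_
    push_cast
    ring
  simp only [hexpand]
  rw [gegenbauerMean_add hl hf (by fun_prop),
    gegenbauerMean_finsetSum hl _ fun s _ => by fun_prop]
  congr 1
  refine Finset.sum_congr rfl fun s _ => ?_
  have hp := (poch_pos (show 0 < l + 1 / 2 by linarith) s).ne'
  rw [gegenbauerMean_const_mul, gegenbauerMean_one_sub_sq_pow_mul hl, ← mul_assoc,
    ← Complex.ofReal_mul, mul_assoc, div_mul_div_cancel₀ hp]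

lemma sum_choose_mul_gegenbauerMean_ofReal_mul_exp {l : ℝ} (hl : -(1 / 2 : ℝ) < l) (r : ℕ)
    (v : ℝ) :
    ∑ s ∈ range (r + 1), ((-1) ^ s * (r.choose s) * (poch (l + r + 1) s / poch (l + 1) s) : ℝ) *
        gegenbauerMean (l + s) (fun t => t * Complex.exp (-Complex.I * v * t)) =
      Complex.I * (-1) ^ (r + 1) *
        (v ^ (2 * r + 1) / (2 ^ (2 * r + 1) * poch (l + 1) (2 * r + 1)) : ℝ) *
          nbessel (l + (2 * r + 1)) v := by
  have hterm (s : ℕ) :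
      ((-1) ^ s * (r.choose s) * (poch (l + r + 1) s / poch (l + 1) s) : ℝ) *
          gegenbauerMean (l + s) (fun t => t * Complex.exp (-Complex.I * v * t)) =
        -Complex.I * (v / 2 / (l + 1) * ((-1) ^ s * (r.choose s) *
          (poch (l + 1 + r) s / poch (l + 1 + 1) s) * nbessel (l + 1 + s) v) : ℝ) := by
    have hls : -(1 / 2 : ℝ) < l + s := lt_add_of_lt_of_nonneg hl s.cast_nonneg
    have hratio : poch (l + 1 + r) s / poch (l + 1) s / (l + 1 + s) =
        poch (l + 1 + r) s / (l + 1) / poch (l + 1 + 1) s := by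
      rw [div_div, div_div, ← poch_succ, poch_succ']
    rw [gegenbauerMean_ofReal_mul_exp hls, mul_left_comm, ← Complex.ofReal_mul,
      add_right_comm l s, add_right_comm l r]
    congr 2
    linear_combination (-1) ^ s * (r.choose s) * (v / 2) * nbessel (l + 1 + s) v * hratio
  simp only [hterm]
  rw [← Finset.mul_sum, ← Complex.ofReal_sum, ← Finset.mul_sum,
    sum_choose_mul_nbessel (by linarith), poch_succ', div_pow,
    ← div_div (v ^ (2 * r + 1)), ← div_div _ (l + 1),
    show l + 1 + (2 * r : ℕ) = l + (2 * r + 1) by push_cast; ring]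
  push_cast
  ring

/-- integral representation of e_{2r+1}(v, lambda). -/
theorem stmt6 (r : ℕ) (l : ℝ) (hl : -(1 / 2 : ℝ) < l) (v : ℝ) :
    e2r1 r l v =
      (cgeg l : ℂ) * ∫ t in (-1 : ℝ)..1,
        (((1 - t ^ 2) ^ (l - 1 / 2) * qOdd r l t : ℝ) : ℂ) *
          Complex.exp (-Complex.I * (v * t : ℝ)) := by
  have hmean : gegenbauerMean l (fun t => qOdd r l t * Complex.exp (-Complex.I * v * t)) =
      (cgeg l : ℂ) * ∫ t in (-1 : ℝ)..1, (((1 - t ^ 2) ^ (l - 1 / 2) * qOdd r l t : ℝ) : ℂ) *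
        Complex.exp (-Complex.I * (v * t : ℝ)) := by
    simp only [gegenbauerMean, Complex.ofReal_mul, mul_assoc]
  rw [← hmean, gegenbauerMean_qOdd_mul hl r (by fun_prop), gegenbauerMean_exp hl,
    sum_choose_mul_gegenbauerMean_ofReal_mul_exp hl, e2r1]
end
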